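/- arXiv:2104.10711 — 4 statements merged into one kernel-verified Lean document; each statement's English description precedes it below -/
import Mathlib

section
/- Let H be a separable real Hilbert space and let (S_t)_{t ≥ 0} be a family of continuous linear operators on H such that S_0 = id_H, S_{s+t} = S_s ∘ S_t for all s, t ≥ 0, ‖S_t x‖_H ≤ ‖x‖_H for all t ≥ 0 and x ∈ H, and for each x ∈ H the map t ↦ S_t x is continuous on [0,∞) (i.e. (S_t) is a C₀-semigroup of contractions). Then there exist a separable real Hilbert space ℋ, a family (U_t)_{t ∈ ℝ} of surjective linear isometries (unitary operators) of ℋ with U_0 = id_ℋ, U_{s+t} = U_s ∘ U_t for all s, t ∈ ℝ, and t ↦ U_t x continuous on ℝ for each x ∈ ℋ, and a linear isometry ℓ : H → ℋ, such that ℓ* ∘ U_t ∘ ℓ = S_t for all t ≥ 0, where ℓ* denotes the Hilbert-space adjoint of ℓ (so π := ℓ* is the orthogonal projection of ℋ onto H). -/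
/-- A unitary dilation of a family `S` of operators on a real Hilbert space `H`:
a separable real Hilbert space `carrier`, a strongly continuous one-parameter group
of unitary operators `U` on `carrier`, and an isometric embedding `embed : H → carrier`
such that `embed* ∘ U t ∘ embed = S t` for all `t ≥ 0`. -/
structure UnitaryDilation (H : Type) [NormedAddCommGroup H] [InnerProductSpace ℝ H]
    [CompleteSpace H] (S : ℝ → H →L[ℝ] H) where
  carrier : Type
  [instNormed : NormedAddCommGroup carrier]
  [instInner : InnerProductSpace ℝ carrier]
  [instComplete : CompleteSpace carrier]
  [instSep : TopologicalSpace.SeparableSpace carrier]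
  U : ℝ → carrier →L[ℝ] carrier
  U_zero : U 0 = 1
  U_add : ∀ s t : ℝ, U (s + t) = (U s).comp (U t)
  U_isometry : ∀ (t : ℝ) (x : carrier), ‖U t x‖ = ‖x‖
  U_surjective : ∀ t : ℝ, Function.Surjective (U t)
  U_continuous : ∀ x : carrier, Continuous fun t : ℝ => U t x
  embed : H →L[ℝ] carrier
  embed_isometry : ∀ x : H, ‖embed x‖ = ‖x‖
  dilation : ∀ t : ℝ, 0 ≤ t →
    (ContinuousLinearMap.adjoint embed).comp ((U t).comp embed) = S t

/-!
The semigroup `S` extends to all of `ℝ` by `T (-t) = (S t)*`. The point is that `T` is positive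
definite. Order the points of a finite sum increasingly and put `w a = ∑ x, S (x - a) (v x)`, the
sum being over the points `x ≥ a`. Adding a new smallest point `a` changes the quadratic form
`∑ x, ∑ y, ⟪T (x - y) (v x), v y⟫` by exactly the change of `‖w a‖ ^ 2`, and moving the base point
further down from `a` to `b` replaces `w a` by its image under the contraction `S (a - b)`. So by
induction the quadratic form dominates `‖w b‖ ^ 2`.

Naimark's dilation theorem then applies. The kernel `(x, y) ↦ T (-x + y)` is the reproducing
kernel of a Hilbert space of functions `ℝ → H`. It is invariant under translations, which therefore
act unitarily on that space, and the kernel functions based at `0` form an isometric copy of `H`.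
-/

open RKHS Submodule TopologicalSpace
open scoped InnerProductSpace

universe u v w

noncomputable section

section IsometricFamily

variable {𝕜 T E F : Type*} [NormedField 𝕜] [TopologicalSpace T]
  [SeminormedAddCommGroup E] [NormedSpace 𝕜 E] [SeminormedAddCommGroup F] [NormedSpace 𝕜 F]

lemma continuous_apply_of_mem_span {U : T → E →ₗ[𝕜] F} {s : Set E}
    (hs : ∀ x ∈ s, Continuous fun t ↦ U t x) {x : E} (hx : x ∈ span 𝕜 s) :
    Continuous fun t ↦ U t x := by
  induction hx using span_induction with
  | mem x hx => exact hs x hx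
  | zero => simp only [map_zero]; exact continuous_const
  | add x y _ _ hx hy => simp only [map_add]; exact hx.add hy
  | smul c x _ hx => simp only [map_smul]; exact hx.const_smul c

lemma continuous_apply_of_topologicalClosure_span_eq_top {U : T → E →ₗᵢ[𝕜] F} {s : Set E}
    (hdense : (span 𝕜 s).topologicalClosure = ⊤) (hs : ∀ x ∈ s, Continuous fun t ↦ U t x)
    (x : E) : Continuous fun t ↦ U t x := by
  refine continuous_of_uniform_approx_of_continuous fun W hW ↦ ?_
  obtain ⟨ε, hε, hεW⟩ := Metric.mem_uniformity_dist.1 hW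
  have hx : x ∈ closure (span 𝕜 s : Set E) := by
    rw [← topologicalClosure_coe, hdense]
    exact Set.mem_univ x
  obtain ⟨y, hy, hxy⟩ := Metric.mem_closure_iff.1 hx ε hε
  exact ⟨_, continuous_apply_of_mem_span (U := fun t ↦ (U t).toLinearMap) hs hy,
    fun t ↦ hεW <| ((U t).dist_map x y).trans_lt hxy⟩

end IsometricFamily

section ReproducingKernel

variable {𝕜 X V : Type*} [RCLike 𝕜] [NormedAddCommGroup V] [InnerProductSpace 𝕜 V]
  [CompleteSpace V]
variable (𝓗 : Type*) [NormedAddCommGroup 𝓗] [InnerProductSpace 𝕜 𝓗] [CompleteSpace 𝓗]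
  [RKHS 𝕜 𝓗 X V]

lemma separableSpace_of_continuous_kerFun [TopologicalSpace X] [SeparableSpace X]
    [SeparableSpace V] (hcont : ∀ v, Continuous fun x ↦ kerFun 𝓗 x v) : SeparableSpace 𝓗 := by
  let s : Set 𝓗 := ⋃ n, Set.range fun x ↦ kerFun 𝓗 x (denseSeq V n)
  have hs : IsSeparable s := .iUnion fun n ↦ isSeparable_range (hcont (denseSeq V n))
  have kerFun_mem_closure (x : X) (v : V) : kerFun 𝓗 x v ∈ closure s :=
    map_mem_closure (kerFun 𝓗 x).continuous (denseRange_denseSeq V v) <|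
      Set.forall_mem_range.2 fun n ↦ Set.mem_iUnion_of_mem n (Set.mem_range_self x)
  have hspan : IsSeparable (closure (span 𝕜 {kerFun 𝓗 x v | (x) (v)} : Set 𝓗)) := by
    refine ((hs.closure.mono ?_).span (R := 𝕜)).closure
    rintro _ ⟨x, v, rfl⟩
    exact kerFun_mem_closure x v
  rwa [← topologicalClosure_coe, kerFun_dense, top_coe, isSeparable_univ_iff] at hspan

/-- The combination `∑ x, kerFun 𝓗 x (f x)` of kernel functions with finitely supported
coefficients `f`. These are the elements on which operators of `𝓗` are prescribed explicitly. -/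
def kerFunSum : (X →₀ V) →ₗ[𝕜] 𝓗 :=
  Finsupp.lsum 𝕜 fun x ↦ (kerFun 𝓗 x).toLinearMap

@[simp]
lemma kerFunSum_single (x : X) (v : V) : kerFunSum 𝓗 (Finsupp.single x v) = kerFun 𝓗 x v := by
  simp [kerFunSum]

lemma denseRange_kerFunSum : DenseRange (kerFunSum 𝓗) := by
  have hspan : span 𝕜 {kerFun 𝓗 x v | (x) (v)} ≤ LinearMap.range (kerFunSum 𝓗) := by
    rw [span_le]
    rintro _ ⟨x, v, rfl⟩
    exact ⟨_, kerFunSum_single 𝓗 x v⟩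
  have hrange : (LinearMap.range (kerFunSum 𝓗)).topologicalClosure = ⊤ :=
    top_unique <| (kerFun_dense 𝓗).ge.trans <| topologicalClosure_mono hspan
  rwa [← dense_iff_topologicalClosure_eq_top, LinearMap.coe_range] at hrange

lemma inner_kerFunSum (f g : X →₀ V) :
    ⟪kerFunSum 𝓗 f, kerFunSum 𝓗 g⟫_𝕜 =
      f.sum fun y v ↦ g.sum fun x w ↦ ⟪kernel 𝓗 x y v, w⟫_𝕜 := by
  rw [kerFunSum, Finsupp.lsum_apply, Finsupp.lsum_apply, Finsupp.sum_inner]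
  simp only [Finsupp.inner_sum, ContinuousLinearMap.coe_coe, kernel_inner]

variable {𝓗}

lemma norm_kerFunSum_domLCongr {φ : Equiv.Perm X}
    (hφ : ∀ x y, kernel 𝓗 (φ x) (φ y) = kernel 𝓗 x y) (f : X →₀ V) :
    ‖kerFunSum 𝓗 (Finsupp.domLCongr (R := 𝕜) φ f)‖ = ‖kerFunSum 𝓗 f‖ := by
  have hinner : ⟪kerFunSum 𝓗 (Finsupp.domLCongr (R := 𝕜) φ f),
      kerFunSum 𝓗 (Finsupp.domLCongr (R := 𝕜) φ f)⟫_𝕜 = ⟪kerFunSum 𝓗 f, kerFunSum 𝓗 f⟫_𝕜 := by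
    simp only [inner_kerFunSum, Finsupp.domLCongr_apply, Finsupp.domCongr_apply,
      Finsupp.sum_equivMapDomain, hφ]
  rw [norm_eq_sqrt_re_inner (𝕜 := 𝕜), hinner, ← norm_eq_sqrt_re_inner]

/-- The unitary operator `f ↦ f ∘ φ⁻¹` of a reproducing kernel Hilbert space induced by a
permutation `φ` that preserves the kernel. It is defined by extending
`kerFun 𝓗 x v ↦ kerFun 𝓗 (φ x) v`. -/
def permIsometry (φ : Equiv.Perm X) (hφ : ∀ x y, kernel 𝓗 (φ x) (φ y) = kernel 𝓗 x y) :
    𝓗 ≃ₗᵢ[𝕜] 𝓗 :=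
  (Finsupp.domLCongr (R := 𝕜) (M := V) φ).extendOfIsometry (kerFunSum 𝓗) (kerFunSum 𝓗)
    (denseRange_kerFunSum 𝓗) (denseRange_kerFunSum 𝓗) (norm_kerFunSum_domLCongr hφ)

lemma permIsometry_kerFun {φ : Equiv.Perm X}
    (hφ : ∀ x y, kernel 𝓗 (φ x) (φ y) = kernel 𝓗 x y) (x : X) (v : V) :
    permIsometry φ hφ (kerFun 𝓗 x v) = kerFun 𝓗 (φ x) v := by
  rw [← kerFunSum_single, permIsometry, LinearEquiv.extendOfIsometry_eq, Finsupp.domLCongr_single,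
    kerFunSum_single]

lemma permIsometry_apply {φ : Equiv.Perm X}
    (hφ : ∀ x y, kernel 𝓗 (φ x) (φ y) = kernel 𝓗 x y) (f : 𝓗) (x : X) :
    permIsometry φ hφ f x = f (φ.symm x) := by
  refine ext_inner_left 𝕜 fun v ↦ ?_
  calc ⟪v, permIsometry φ hφ f x⟫_𝕜
      = ⟪permIsometry φ hφ (kerFun 𝓗 (φ.symm x) v), permIsometry φ hφ f⟫_𝕜 := by
        rw [permIsometry_kerFun, φ.apply_symm_apply, kerFun_inner]
    _ = ⟪v, f (φ.symm x)⟫_𝕜 := by rw [LinearIsometryEquiv.inner_map_map, kerFun_inner]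

variable {G : Type*} [AddGroup G] [AddAction G X]

/-- The unitary representation `(g, f) ↦ f (-g +ᵥ ·)` of a group `G` on a reproducing kernel
Hilbert space whose kernel is invariant under an action of `G`. -/
def translationRep (hinv : ∀ (g : G) (x y : X), kernel 𝓗 (g +ᵥ x) (g +ᵥ y) = kernel 𝓗 x y) :
    Multiplicative G →* (𝓗 ≃ₗᵢ[𝕜] 𝓗) where
  toFun g := permIsometry (AddAction.toPerm g.toAdd) fun x y ↦ by
    simp only [AddAction.toPerm_apply, hinv]
  map_one' := by
    ext f : 1
    refine RKHS.ext fun x ↦ ?_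
    simp [permIsometry_apply]
  map_mul' g h := by
    ext f : 1
    refine RKHS.ext fun x ↦ ?_
    simp [permIsometry_apply, add_vadd]

variable (hinv : ∀ (g : G) (x y : X), kernel 𝓗 (g +ᵥ x) (g +ᵥ y) = kernel 𝓗 x y)

lemma translationRep_kerFun (g : G) (x : X) (v : V) :
    translationRep hinv (.ofAdd g) (kerFun 𝓗 x v) = kerFun 𝓗 (g +ᵥ x) v :=
  permIsometry_kerFun (φ := AddAction.toPerm g) (hinv g) x v

lemma continuous_translationRep_apply [TopologicalSpace G]
    (hcont : ∀ x v, Continuous fun g : G ↦ kerFun 𝓗 (g +ᵥ x) v) (f : 𝓗) :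
    Continuous fun g : G ↦ translationRep hinv (.ofAdd g) f := by
  refine continuous_apply_of_topologicalClosure_span_eq_top
    (U := fun g ↦ (translationRep hinv (.ofAdd g)).toLinearIsometry) (kerFun_dense 𝓗) ?_ f
  rintro _ ⟨x, v, rfl⟩
  simpa only [LinearIsometryEquiv.coe_toLinearIsometry, translationRep_kerFun] using hcont x v

end ReproducingKernel

section Naimark

variable {𝕜 : Type u} {G : Type v} {V : Type w} [RCLike 𝕜] [AddGroup G]
  [NormedAddCommGroup V] [InnerProductSpace 𝕜 V]

/-- The translation-invariant kernel `(x, y) ↦ T (-x + y)` of an operator-valued function `T` on a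
group. The function `T` is positive definite when this kernel is positive semidefinite. -/
def toeplitzKernel (T : G → V →L[𝕜] V) : Matrix G G (V →L[𝕜] V) :=
  .of fun x y ↦ T (-x + y)

@[simp]
lemma toeplitzKernel_apply (T : G → V →L[𝕜] V) (x y : G) :
    toeplitzKernel T x y = T (-x + y) := rfl

lemma toeplitzKernel_vadd_vadd (T : G → V →L[𝕜] V) (g x y : G) :
    toeplitzKernel T (g +ᵥ x) (g +ᵥ y) = toeplitzKernel T x y := by
  simp [neg_add_rev, add_assoc]

variable [CompleteSpace V] {T : G → V →L[𝕜] V}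
variable {𝓗 : Type*} [NormedAddCommGroup 𝓗] [InnerProductSpace 𝕜 𝓗] [CompleteSpace 𝓗]
  [RKHS 𝕜 𝓗 G V]

lemma inner_kerFun_kerFun_of_kernel_eq_toeplitzKernel (hT : kernel 𝓗 = toeplitzKernel T)
    (x y : G) (v w : V) : ⟪kerFun 𝓗 y v, kerFun 𝓗 x w⟫_𝕜 = ⟪T (-x + y) v, w⟫_𝕜 := by
  rw [← kernel_inner, hT, toeplitzKernel_apply]

lemma norm_sq_kerFun_of_kernel_eq_toeplitzKernel (hT : kernel 𝓗 = toeplitzKernel T)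
    (x : G) (v : V) : ‖kerFun 𝓗 x v‖ ^ 2 = RCLike.re ⟪T 0 v, v⟫_𝕜 := by
  rw [← inner_self_eq_norm_sq (𝕜 := 𝕜), inner_kerFun_kerFun_of_kernel_eq_toeplitzKernel hT,
    neg_add_cancel]

lemma norm_sq_kerFun_sub_kerFun_of_kernel_eq_toeplitzKernel
    (hT : kernel 𝓗 = toeplitzKernel T) (x y : G) (v : V) :
    ‖kerFun 𝓗 x v - kerFun 𝓗 y v‖ ^ 2 =
      2 * RCLike.re ⟪T 0 v, v⟫_𝕜 - 2 * RCLike.re ⟪T (-y + x) v, v⟫_𝕜 := by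
  rw [norm_sub_sq (𝕜 := 𝕜), inner_kerFun_kerFun_of_kernel_eq_toeplitzKernel hT,
    norm_sq_kerFun_of_kernel_eq_toeplitzKernel hT, norm_sq_kerFun_of_kernel_eq_toeplitzKernel hT]
  ring

variable [TopologicalSpace G]

lemma continuous_kerFun_of_kernel_eq_toeplitzKernel [SeparatelyContinuousAdd G]
    (hT : kernel 𝓗 = toeplitzKernel T)
    (hcont : ∀ v, Continuous fun g ↦ RCLike.re ⟪T g v, v⟫_𝕜) (v : V) :
    Continuous fun x ↦ kerFun 𝓗 x v := by
  refine continuous_iff_continuousAt.2 fun y ↦ tendsto_iff_norm_sub_tendsto_zero.2 ?_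
  have hsq : Continuous fun x ↦ ‖kerFun 𝓗 x v - kerFun 𝓗 y v‖ ^ 2 := by
    simp only [norm_sq_kerFun_sub_kerFun_of_kernel_eq_toeplitzKernel hT]
    exact continuous_const.sub <| continuous_const.mul <| (hcont v).comp <| continuous_const_add _
  simpa [Real.sqrt_sq] using hsq.sqrt.tendsto y

theorem exists_unitary_dilation_of_posSemidef_toeplitzKernel [SeparatelyContinuousAdd G]
    (hpos : (toeplitzKernel T).PosSemidef) (hT0 : T 0 = 1)
    (hcont : ∀ v, Continuous fun g ↦ RCLike.re ⟪T g v, v⟫_𝕜) :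
    ∃ (𝓗 : Type (max u v w)) (_ : NormedAddCommGroup 𝓗) (_ : InnerProductSpace 𝕜 𝓗)
      (_ : CompleteSpace 𝓗) (U : Multiplicative G →* (𝓗 ≃ₗᵢ[𝕜] 𝓗)) (ℓ : V →ₗᵢ[𝕜] 𝓗),
      (∀ x, Continuous fun g : G ↦ U (.ofAdd g) x) ∧
      (∀ g v, ℓ.toContinuousLinearMap.adjoint (U (.ofAdd g) (ℓ v)) = T g v) ∧
      (SeparableSpace G → SeparableSpace V → SeparableSpace 𝓗) := by
  have : Fact (toeplitzKernel T).PosSemidef := ⟨hpos⟩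
  let 𝓗 := OfKernel (toeplitzKernel T)
  have hker : kernel 𝓗 = toeplitzKernel T := OfKernel.kernel_ofKernel
  have hinv (g x y : G) : kernel 𝓗 (g +ᵥ x) (g +ᵥ y) = kernel 𝓗 x y := by
    rw [hker, toeplitzKernel_vadd_vadd]
  have hkerFun (v : V) : Continuous fun x ↦ kerFun 𝓗 x v :=
    continuous_kerFun_of_kernel_eq_toeplitzKernel hker hcont v
  let ℓ : V →ₗᵢ[𝕜] 𝓗 :=
    { toLinearMap := (kerFun 𝓗 0).toLinearMap
      norm_map' v := by
        have hsq := norm_sq_kerFun_of_kernel_eq_toeplitzKernel hker 0 v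
        rw [hT0, one_apply_eq_self, inner_self_eq_norm_sq] at hsq
        exact (sq_eq_sq₀ (norm_nonneg _) (norm_nonneg _)).1 hsq }
  refine ⟨𝓗, inferInstance, inferInstance, inferInstance, translationRep hinv, ℓ, ?_, ?_, ?_⟩
  · exact continuous_translationRep_apply hinv fun x v ↦ (hkerFun v).comp (continuous_add_const x)
  · refine fun g v ↦ ext_inner_right 𝕜 fun w ↦ ?_
    calc ⟪ℓ.toContinuousLinearMap.adjoint (translationRep hinv (.ofAdd g) (ℓ v)), w⟫_𝕜
        = ⟪translationRep hinv (.ofAdd g) (kerFun 𝓗 0 v), kerFun 𝓗 0 w⟫_𝕜 :=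
          ContinuousLinearMap.adjoint_inner_left ..
      _ = ⟪T g v, w⟫_𝕜 := by
          rw [translationRep_kerFun, inner_kerFun_kerFun_of_kernel_eq_toeplitzKernel hker]
          simp
  · exact fun _ _ ↦ separableSpace_of_continuous_kerFun 𝓗 hkerFun

end Naimark

section ContractionSemigroup

variable {𝕜 : Type u} {G : Type v} {H : Type w} [RCLike 𝕜]
  [AddCommGroup G] [LinearOrder G]
  [NormedAddCommGroup H] [InnerProductSpace 𝕜 H]

/-- A semigroup of contractions indexed by the nonnegative elements of an ordered group. The values
of `S` at negative elements are unconstrained. -/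
structure IsContractionSemigroup (S : G → H →L[𝕜] H) : Prop where
  map_zero : S 0 = 1
  map_add : ∀ s t, 0 ≤ s → 0 ≤ t → S (s + t) = S s ∘L S t
  norm_apply_le : ∀ t, 0 ≤ t → ∀ x, ‖S t x‖ ≤ ‖x‖

variable {S : G → H →L[𝕜] H}

lemma IsContractionSemigroup.sum_sub_eq_apply_sum_sub [IsOrderedAddMonoid G]
    (hS : IsContractionSemigroup S) {a b : G} (hba : b ≤ a) {s : Finset G}
    (has : ∀ x ∈ s, a ≤ x) (v : G → H) :
    ∑ x ∈ s, S (x - b) (v x) = S (a - b) (∑ x ∈ s, S (x - a) (v x)) := by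
  rw [map_sum]
  refine Finset.sum_congr rfl fun x hx ↦ ?_
  rw [← ContinuousLinearMap.comp_apply,
    ← hS.map_add _ _ (sub_nonneg.2 hba) (sub_nonneg.2 (has x hx)), sub_add_sub_cancel']

variable [CompleteSpace H]

/-- The extension of a family of operators on the nonnegative elements of an ordered group to the
whole group by `S (-t) = (S t)*`. -/
def adjointExtension (S : G → H →L[𝕜] H) (t : G) : H →L[𝕜] H :=
  if 0 ≤ t then S t else (S (-t)).adjoint

lemma adjointExtension_of_nonneg {t : G} (ht : 0 ≤ t) : adjointExtension S t = S t :=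
  if_pos ht

variable (S) in
/-- The quadratic form `∑ x ∈ s, ∑ y ∈ s, ⟪T (x - y) (v x), v y⟫` attached to the extension `T` of
`S`, whose nonnegativity is the positive definiteness of `T`. -/
def extensionForm (v : G → H) (s : Finset G) : 𝕜 :=
  ∑ x ∈ s, ∑ y ∈ s, ⟪adjointExtension S (x - y) (v x), v y⟫_𝕜

variable [IsOrderedAddMonoid G]

lemma adjoint_adjointExtension (hS0 : S 0 = 1) (t : G) :
    (adjointExtension S t).adjoint = adjointExtension S (-t) := by
  rcases lt_trichotomy t 0 with ht | rfl | ht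
  · simp [adjointExtension, ht.not_ge, ht.le]
  · simp [adjointExtension, hS0, ← ContinuousLinearMap.star_eq_adjoint]
  · simp [adjointExtension, ht.not_ge, ht.le]

lemma inner_adjointExtension_neg (hS0 : S 0 = 1) (t : G) (v w : H) :
    ⟪adjointExtension S (-t) v, w⟫_𝕜 = ⟪v, adjointExtension S t w⟫_𝕜 := by
  rw [← adjoint_adjointExtension hS0, ContinuousLinearMap.adjoint_inner_left]

lemma re_inner_adjointExtension_self (hS0 : S 0 = 1) (t : G) (v : H) :
    RCLike.re ⟪adjointExtension S t v, v⟫_𝕜 = RCLike.re ⟪S |t| v, v⟫_𝕜 := by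
  rcases le_total 0 t with ht | ht
  · rw [abs_of_nonneg ht, adjointExtension_of_nonneg ht]
  · rw [abs_of_nonpos ht, ← adjointExtension_of_nonneg (S := S) (neg_nonneg.2 ht),
      inner_adjointExtension_neg hS0, inner_re_symm]

lemma continuous_re_inner_adjointExtension_self [TopologicalSpace G] [OrderTopology G]
    (hS0 : S 0 = 1) {v : H} (hcont : ContinuousOn (fun t ↦ ⟪S t v, v⟫_𝕜) (Set.Ici 0)) :
    Continuous fun t ↦ RCLike.re ⟪adjointExtension S t v, v⟫_𝕜 := by
  simp only [re_inner_adjointExtension_self hS0]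
  exact RCLike.continuous_re.comp (hcont.comp_continuous continuous_abs abs_nonneg)

lemma re_extensionForm_insert (hS0 : S 0 = 1) (v : G → H) {a : G} {s : Finset G}
    (has : ∀ x ∈ s, a < x) :
    RCLike.re (extensionForm S v (insert a s)) =
      RCLike.re (extensionForm S v s) + ‖∑ x ∈ insert a s, S (x - a) (v x)‖ ^ 2
        - ‖∑ x ∈ s, S (x - a) (v x)‖ ^ 2 := by
  have ha : a ∉ s := fun h ↦ (has a h).false
  have hcol : ∑ x ∈ s, ⟪adjointExtension S (x - a) (v x), v a⟫_𝕜 =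
      ⟪∑ x ∈ s, S (x - a) (v x), v a⟫_𝕜 := by
    rw [sum_inner]
    refine Finset.sum_congr rfl fun x hx ↦ ?_
    rw [adjointExtension_of_nonneg (sub_nonneg.2 (has x hx).le)]
  have hrow : ∑ y ∈ s, ⟪adjointExtension S (a - y) (v a), v y⟫_𝕜 =
      ⟪v a, ∑ x ∈ s, S (x - a) (v x)⟫_𝕜 := by
    rw [inner_sum]
    refine Finset.sum_congr rfl fun y hy ↦ ?_
    rw [← neg_sub, inner_adjointExtension_neg hS0,
      adjointExtension_of_nonneg (sub_nonneg.2 (has y hy).le)]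
  have hdiag : ⟪adjointExtension S (a - a) (v a), v a⟫_𝕜 = ⟪v a, v a⟫_𝕜 := by
    rw [sub_self, adjointExtension_of_nonneg le_rfl, hS0, one_apply_eq_self]
  have hform : extensionForm S v (insert a s) = ⟪v a, v a⟫_𝕜 +
      ⟪v a, ∑ x ∈ s, S (x - a) (v x)⟫_𝕜 + (⟪∑ x ∈ s, S (x - a) (v x), v a⟫_𝕜 +
        extensionForm S v s) := by
    simp only [extensionForm, Finset.sum_insert ha, Finset.sum_add_distrib, hcol, hrow, hdiag]
  have hsum : ∑ x ∈ insert a s, S (x - a) (v x) = v a + ∑ x ∈ s, S (x - a) (v x) := by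
    rw [Finset.sum_insert ha, sub_self, hS0, one_apply_eq_self]
  rw [hform, hsum, norm_add_sq (𝕜 := 𝕜), ← inner_self_eq_norm_sq (𝕜 := 𝕜) (v a)]
  simp only [map_add, inner_re_symm (𝕜 := 𝕜) _ (v a)]
  ring

lemma IsContractionSemigroup.norm_sq_sum_le_re_extensionForm (hS : IsContractionSemigroup S)
    (v : G → H) {s : Finset G} {b : G} (hb : ∀ x ∈ s, b ≤ x) :
    ‖∑ x ∈ s, S (x - b) (v x)‖ ^ 2 ≤ RCLike.re (extensionForm S v s) := by
  induction s using Finset.induction_on_min generalizing b with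
  | empty => simp [extensionForm]
  | insert a s has ih =>
    have hba : b ≤ a := hb a (Finset.mem_insert_self a s)
    have hle : ∀ x ∈ insert a s, a ≤ x := by
      simpa using fun x hx ↦ (has x hx).le
    have hcontr : ‖∑ x ∈ insert a s, S (x - b) (v x)‖ ≤ ‖∑ x ∈ insert a s, S (x - a) (v x)‖ := by
      rw [hS.sum_sub_eq_apply_sum_sub hba hle]
      exact hS.norm_apply_le _ (sub_nonneg.2 hba) _
    calc ‖∑ x ∈ insert a s, S (x - b) (v x)‖ ^ 2
        ≤ ‖∑ x ∈ insert a s, S (x - a) (v x)‖ ^ 2 := by gcongr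
      _ ≤ RCLike.re (extensionForm S v (insert a s)) := by
          rw [re_extensionForm_insert hS.map_zero v has]
          linarith [ih fun x hx ↦ (has x hx).le]

lemma isHermitian_toeplitzKernel_adjointExtension (hS0 : S 0 = 1) :
    (toeplitzKernel (adjointExtension S)).IsHermitian := by
  refine Matrix.IsHermitian.ext fun x y ↦ ?_
  simp [ContinuousLinearMap.star_eq_adjoint, adjoint_adjointExtension hS0]

lemma IsContractionSemigroup.posSemidef_toeplitzKernel_adjointExtension
    (hS : IsContractionSemigroup S) : (toeplitzKernel (adjointExtension S)).PosSemidef := by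
  have posSemidef_iff := (posSemidef_tfae (K := toeplitzKernel (adjointExtension S))).out 0 2
  refine posSemidef_iff.2 ⟨isHermitian_toeplitzKernel_adjointExtension hS.map_zero, fun v ↦ ?_⟩
  obtain ⟨b, hb⟩ := v.support.finite_toSet.bddBelow
  simpa [extensionForm, Finsupp.sum, neg_add_eq_sub] using
    (sq_nonneg _).trans (hS.norm_sq_sum_le_re_extensionForm v fun x hx ↦ hb hx)

theorem nagy_dilation_of_contraction_semigroup_general [TopologicalSpace G] [OrderTopology G]
    (hS : IsContractionSemigroup S)
    (hcont : ∀ v, ContinuousOn (fun t ↦ ⟪S t v, v⟫_𝕜) (Set.Ici 0)) :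
    ∃ (𝓗 : Type (max u v w)) (_ : NormedAddCommGroup 𝓗) (_ : InnerProductSpace 𝕜 𝓗)
      (_ : CompleteSpace 𝓗) (U : Multiplicative G →* (𝓗 ≃ₗᵢ[𝕜] 𝓗)) (ℓ : H →ₗᵢ[𝕜] 𝓗),
      (∀ x, Continuous fun t : G ↦ U (.ofAdd t) x) ∧
      (∀ t, 0 ≤ t → ∀ v, ℓ.toContinuousLinearMap.adjoint (U (.ofAdd t) (ℓ v)) = S t v) ∧
      (SeparableSpace G → SeparableSpace H → SeparableSpace 𝓗) := by
  obtain ⟨𝓗, _, _, _, U, ℓ, hU, hdil, hsep⟩ :=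
    exists_unitary_dilation_of_posSemidef_toeplitzKernel
      hS.posSemidef_toeplitzKernel_adjointExtension
      ((adjointExtension_of_nonneg le_rfl).trans hS.map_zero)
      fun v ↦ continuous_re_inner_adjointExtension_self hS.map_zero (hcont v)
  exact ⟨𝓗, _, _, ‹_›, U, ℓ, hU,
    fun t ht v ↦ by rw [hdil, adjointExtension_of_nonneg ht], hsep⟩

end ContractionSemigroup

/-- The unitary dilation given by a strongly continuous unitary representation of `ℝ` and a linear
isometry. -/
def UnitaryDilation.ofUnitaryRep {H 𝓗 : Type} [NormedAddCommGroup H] [InnerProductSpace ℝ H]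
    [CompleteSpace H] [NormedAddCommGroup 𝓗] [InnerProductSpace ℝ 𝓗] [CompleteSpace 𝓗]
    [SeparableSpace 𝓗] {S : ℝ → H →L[ℝ] H} (U : Multiplicative ℝ →* (𝓗 ≃ₗᵢ[ℝ] 𝓗))
    (ℓ : H →ₗᵢ[ℝ] 𝓗) (hU : ∀ x, Continuous fun t : ℝ ↦ U (.ofAdd t) x)
    (hdil : ∀ t, 0 ≤ t → ∀ v, ℓ.toContinuousLinearMap.adjoint (U (.ofAdd t) (ℓ v)) = S t v) :
    UnitaryDilation H S where
  carrier := 𝓗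
  U t := (U (.ofAdd t)).toContinuousLinearEquiv.toContinuousLinearMap
  U_zero := by ext; simp
  U_add s t := by ext; simp
  U_isometry t := (U (.ofAdd t)).norm_map
  U_surjective t := (U (.ofAdd t)).surjective
  U_continuous := hU
  embed := ℓ.toContinuousLinearMap
  embed_isometry := ℓ.norm_map
  dilation t ht := ContinuousLinearMap.ext (hdil t ht)

end

/-- Dilation theorem of Sz.-Nagy: every `C₀`-semigroup of contractions on a separable
real Hilbert space admits a dilation to a unitary `C₀`-group on a larger separable
Hilbert space. -/
theorem nagy_dilation_of_contraction_semigroup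
    (H : Type) [NormedAddCommGroup H] [InnerProductSpace ℝ H] [CompleteSpace H]
    [TopologicalSpace.SeparableSpace H]
    (S : ℝ → H →L[ℝ] H)
    (hS0 : S 0 = 1)
    (hSadd : ∀ s t : ℝ, 0 ≤ s → 0 ≤ t → S (s + t) = (S s).comp (S t))
    (hScontr : ∀ t : ℝ, 0 ≤ t → ∀ x : H, ‖S t x‖ ≤ ‖x‖)
    (hScont : ∀ x : H, ContinuousOn (fun t : ℝ => S t x) (Set.Ici (0 : ℝ))) :
    Nonempty (UnitaryDilation H S) := by
  obtain ⟨𝓗, _, _, _, U, ℓ, hU, hdil, hsep⟩ :=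
    nagy_dilation_of_contraction_semigroup_general ⟨hS0, hSadd, hScontr⟩
      fun v ↦ (hScont v).inner continuousOn_const
  have := hsep inferInstance inferInstance
  exact ⟨.ofUnitaryRep U ℓ hU hdil⟩
end

section
/- Let U, H and ℋ be real Hilbert spaces with U separable, ℓ : H → ℋ a linear isometry with adjoint π := ℓ*, and (U_t)_{t ∈ ℝ} a one-parameter group of unitary operators on ℋ. Fix T > 0, a set Ω, an orthonormal basis (e_i)_{i ∈ I} of U, maps α : [0,T] × H × Ω → H and σ : [0,T] × H × Ω → L(U,H), a function f : [0,T] × Ω → [0,∞), and a monotone nondecreasing function τ : [0,∞) → [0,∞). Define a(t,v,ω) := (U_t)*( ℓ( α(t, π(U_t v), ω) ) ) and b(t,v,ω) := (U_t)* ∘ ℓ ∘ σ(t, π(U_t v), ω). Suppose that for all x, y ∈ H and all (t,ω): 2⟨α(t,x,ω) − α(t,y,ω), x − y⟩_H + ∑_{i ∈ I} ‖(σ(t,x,ω) − σ(t,y,ω)) e_i‖_H² ≤ (f(t,ω) + τ(‖y‖_H)) ‖x − y‖_H². Then for all u, v ∈ ℋ and all (t,ω): 2⟨a(t,u,ω)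 − a(t,v,ω), u − v⟩_ℋ + ∑_{i ∈ I} ‖(b(t,u,ω) − b(t,v,ω)) e_i‖_ℋ² ≤ (f(t,ω) + τ(‖v‖_ℋ)) ‖u − v‖_ℋ². -/
open scoped ENNReal RealInnerProductSpace

/-!
For fixed `(t, ω)` the transferred coefficients are `S ∘ α ∘ S†` and `S ∘ σ (S† ·)`, where
`S = (U t)† ∘ ℓ` and `S† = ℓ† ∘ U t`. Passing `S` to the other side of the inner product turns the
drift term at `(u, v)` into the drift term at `(S† u, S† v)`. As `S` and `S†` are contractions, the
diffusion term does not exceed the one at `(S† u, S† v)`, and the bound there does not exceed the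
one at `(u, v)`.
-/

section Contraction

variable {ι 𝕜 E F G : Type*} [NontriviallyNormedField 𝕜]
  [SeminormedAddCommGroup E] [NormedSpace 𝕜 E] [SeminormedAddCommGroup F] [NormedSpace 𝕜 F]
  [SeminormedAddCommGroup G] [NormedSpace 𝕜 G]

/-- The squared Hilbert–Schmidt norm of `A`, computed along the family `e`, with values in `[0, ∞]`.
It is the usual notion when `e` is an orthonormal basis; the definition allows any family. -/
noncomputable def hilbertSchmidtNormSq (e : ι → E) (A : E →L[𝕜] F) : ℝ≥0∞ :=
  ∑' i, (‖A (e i)‖₊ : ℝ≥0∞) ^ 2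

theorem hilbertSchmidtNormSq_comp_le {S : F →L[𝕜] G} (hS : ‖S‖ ≤ 1) (e : ι → E)
    (A : E →L[𝕜] F) : hilbertSchmidtNormSq e (S ∘L A) ≤ hilbertSchmidtNormSq e A := by
  refine ENNReal.tsum_le_tsum fun i => ?_
  have norm_le : ‖S (A (e i))‖ ≤ ‖A (e i)‖ := by
    simpa only [one_mul] using S.le_of_opNorm_le hS (A (e i))
  exact pow_le_pow_left' (ENNReal.coe_le_coe.2 norm_le) 2

theorem mul_norm_sq_le_of_opNorm_le_one {S : F →L[𝕜] G} (hS : ‖S‖ ≤ 1) {κ : ℝ → ℝ}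
    (hκ : MonotoneOn κ (Set.Ici 0)) (hκ0 : ∀ r, 0 ≤ r → 0 ≤ κ r) (x y : F) :
    κ ‖S x‖ * ‖S y‖ ^ 2 ≤ κ ‖x‖ * ‖y‖ ^ 2 := by
  have norm_le (z : F) : ‖S z‖ ≤ ‖z‖ := by
    simpa only [one_mul] using S.le_of_opNorm_le hS z
  have κ_le : κ ‖S x‖ ≤ κ ‖x‖ := hκ (norm_nonneg _) (norm_nonneg _) (norm_le x)
  have κ_nonneg : 0 ≤ κ ‖x‖ := hκ0 _ (norm_nonneg x)
  gcongr
  exact norm_le y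

end Contraction

section Transfer

open ContinuousLinearMap (adjoint)

theorem norm_adjoint_comp_le_one {𝕜 F G K : Type*} [RCLike 𝕜]
    [SeminormedAddCommGroup F] [NormedSpace 𝕜 F]
    [NormedAddCommGroup G] [InnerProductSpace 𝕜 G] [CompleteSpace G]
    [NormedAddCommGroup K] [InnerProductSpace 𝕜 K] [CompleteSpace K]
    {V : G →L[𝕜] K} {W : F →L[𝕜] K} (hV : ∀ x, ‖V x‖ ≤ ‖x‖) (hW : ∀ x, ‖W x‖ ≤ ‖x‖) :
    ‖adjoint V ∘L W‖ ≤ 1 := by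
  have norm_adjoint_le : ‖adjoint V‖ ≤ 1 := by
    rw [LinearIsometryEquiv.norm_map]
    exact V.opNorm_le_bound zero_le_one (by simpa only [one_mul] using hV)
  have norm_le : ‖W‖ ≤ 1 := W.opNorm_le_bound zero_le_one (by simpa only [one_mul] using hW)
  exact ((adjoint V).opNorm_comp_le W).trans
    (mul_le_one₀ norm_adjoint_le (norm_nonneg W) norm_le)

variable {ι E H 𝓗 : Type*} [SeminormedAddCommGroup E] [NormedSpace ℝ E]
  [NormedAddCommGroup H] [InnerProductSpace ℝ H] [NormedAddCommGroup 𝓗] [InnerProductSpace ℝ 𝓗]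

/-- The local monotonicity condition (H2') for a drift `α` and a diffusion coefficient `σ` at a
fixed time and sample point. The function `κ` stands for `r ↦ f(t,ω) + τ(r)`, and the inequality is
taken in `EReal` because the Hilbert–Schmidt norm may be infinite. -/
def IsLocallyMonotone (e : ι → E) (κ : ℝ → ℝ) (α : H → H) (σ : H → E →L[ℝ] H) : Prop :=
  ∀ x y : H,
    ((2 * ⟪α x - α y, x - y⟫ : ℝ) : EReal) + (hilbertSchmidtNormSq e (σ x - σ y) : EReal) ≤
      ((κ ‖y‖ * ‖x - y‖ ^ 2 : ℝ) : EReal)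

variable [CompleteSpace H] [CompleteSpace 𝓗]

theorem local_monotonicity_transfer_general {S : H →L[ℝ] 𝓗} (hS : ‖S‖ ≤ 1) {e : ι → E}
    {κ : ℝ → ℝ} (hκ : MonotoneOn κ (Set.Ici 0)) (hκ0 : ∀ r, 0 ≤ r → 0 ≤ κ r)
    {α : H → H} {σ : H → E →L[ℝ] H} (h : IsLocallyMonotone e κ α σ) :
    IsLocallyMonotone e κ (fun v => S (α (adjoint S v))) (fun v => S ∘L σ (adjoint S v)) := by
  intro u v
  have drift : ⟪S (α (adjoint S u)) - S (α (adjoint S v)), u - v⟫ =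
      ⟪α (adjoint S u) - α (adjoint S v), adjoint S u - adjoint S v⟫ := by
    rw [← map_sub, ← map_sub, ContinuousLinearMap.adjoint_inner_right]
  have diffusion : hilbertSchmidtNormSq e (S ∘L σ (adjoint S u) - S ∘L σ (adjoint S v)) ≤
      hilbertSchmidtNormSq e (σ (adjoint S u) - σ (adjoint S v)) := by
    rw [← ContinuousLinearMap.comp_sub]
    exact hilbertSchmidtNormSq_comp_le hS e _
  have bound : κ ‖adjoint S v‖ * ‖adjoint S u - adjoint S v‖ ^ 2 ≤ κ ‖v‖ * ‖u - v‖ ^ 2 := by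
    rw [← map_sub]
    exact mul_norm_sq_le_of_opNorm_le_one ((adjoint.norm_map S).trans_le hS) hκ hκ0 v (u - v)
  calc ((2 * ⟪S (α (adjoint S u)) - S (α (adjoint S v)), u - v⟫ : ℝ) : EReal) +
        (hilbertSchmidtNormSq e (S ∘L σ (adjoint S u) - S ∘L σ (adjoint S v)) : EReal)
    _ ≤ ((2 * ⟪α (adjoint S u) - α (adjoint S v), adjoint S u - adjoint S v⟫ : ℝ) : EReal) +
        (hilbertSchmidtNormSq e (σ (adjoint S u) - σ (adjoint S v)) : EReal) := by
      rw [drift]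
      gcongr
      exact EReal.coe_ennreal_le_coe_ennreal_iff.2 diffusion
    _ ≤ ((κ ‖adjoint S v‖ * ‖adjoint S u - adjoint S v‖ ^ 2 : ℝ) : EReal) := h _ _
    _ ≤ ((κ ‖v‖ * ‖u - v‖ ^ 2 : ℝ) : EReal) := EReal.coe_le_coe_iff.2 bound

end Transfer

/-- Transfer of the local monotonicity condition (H2') from the coefficients `(α, σ)`
on `H` to the transferred coefficients `a(t,v,ω) = (U_t)* (ℓ (α(t, π (U_t v), ω)))` and
`b(t,v,ω) = (U_t)* ∘ ℓ ∘ σ(t, π (U_t v), ω)` on `𝓗`, where `π = ℓ*` and the squared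
Hilbert–Schmidt norm is computed as `∑' i, ‖· (e i)‖² ∈ [0,∞]` for an orthonormal
basis `e` of the separable Hilbert space `E`. -/
theorem local_monotonicity_transfer
    {E H 𝓗 : Type*}
    [NormedAddCommGroup E] [InnerProductSpace ℝ E] [CompleteSpace E]
    [TopologicalSpace.SeparableSpace E]
    [NormedAddCommGroup H] [InnerProductSpace ℝ H] [CompleteSpace H]
    [NormedAddCommGroup 𝓗] [InnerProductSpace ℝ 𝓗] [CompleteSpace 𝓗]
    (ℓ : H →L[ℝ] 𝓗) (hℓ : ∀ x : H, ‖ℓ x‖ = ‖x‖)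
    (U : ℝ → 𝓗 →L[ℝ] 𝓗)
    (hU0 : U 0 = 1)
    (hUadd : ∀ s t : ℝ, U (s + t) = (U s).comp (U t))
    (hUiso : ∀ (t : ℝ) (x : 𝓗), ‖U t x‖ = ‖x‖)
    (hUsurj : ∀ t : ℝ, Function.Surjective (U t))
    (T : ℝ) (hT : 0 < T) (Ω : Type*)
    {ι : Type*} (e : HilbertBasis ι ℝ E)
    (α : ℝ → H → Ω → H) (σ : ℝ → H → Ω → (E →L[ℝ] H))
    (f : ℝ → Ω → ℝ) (hf : ∀ t ω, 0 ≤ f t ω)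
    (τ : ℝ → ℝ) (hτ0 : ∀ r, 0 ≤ r → 0 ≤ τ r) (hτmono : MonotoneOn τ (Set.Ici (0 : ℝ)))
    (a : ℝ → 𝓗 → Ω → 𝓗)
    (ha : ∀ (t : ℝ) (v : 𝓗) (ω : Ω),
      a t v ω = (ContinuousLinearMap.adjoint (U t))
        (ℓ (α t ((ContinuousLinearMap.adjoint ℓ) (U t v)) ω)))
    (b : ℝ → 𝓗 → Ω → (E →L[ℝ] 𝓗))
    (hb : ∀ (t : ℝ) (v : 𝓗) (ω : Ω),
      b t v ω = ((ContinuousLinearMap.adjoint (U t)).comp ℓ).comp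
        (σ t ((ContinuousLinearMap.adjoint ℓ) (U t v)) ω))
    (hmono : ∀ (x y : H), ∀ t ∈ Set.Icc (0 : ℝ) T, ∀ ω : Ω,
      ((2 * ⟪α t x ω - α t y ω, x - y⟫ : ℝ) : EReal) +
          (∑' i, ((‖(σ t x ω - σ t y ω) (e i)‖₊ : ℝ≥0∞) ^ 2) : ℝ≥0∞) ≤
        (((f t ω + τ ‖y‖) * ‖x - y‖ ^ 2 : ℝ) : EReal)) :
    ∀ (u v : 𝓗), ∀ t ∈ Set.Icc (0 : ℝ) T, ∀ ω : Ω,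
      ((2 * ⟪a t u ω - a t v ω, u - v⟫ : ℝ) : EReal) +
          (∑' i, ((‖(b t u ω - b t v ω) (e i)‖₊ : ℝ≥0∞) ^ 2) : ℝ≥0∞) ≤
        (((f t ω + τ ‖v‖) * ‖u - v‖ ^ 2 : ℝ) : EReal) := by
  intro u v t ht ω
  have contraction : ‖(ContinuousLinearMap.adjoint (U t)).comp ℓ‖ ≤ 1 :=
    norm_adjoint_comp_le_one (fun x => (hUiso t x).le) fun x => (hℓ x).le
  have transfer := local_monotonicity_transfer_general contraction
    (κ := fun r => f t ω + τ r) (hτmono.const_add (f t ω))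
    (fun r hr => add_nonneg (hf t ω) (hτ0 r hr)) fun x y => hmono x y t ht ω
  simpa only [ha, hb, ContinuousLinearMap.adjoint_comp, ContinuousLinearMap.adjoint_adjoint,
    ContinuousLinearMap.comp_apply, hilbertSchmidtNormSq] using transfer u v
end

section
/- Let U, H and ℋ be real Hilbert spaces with U separable, ℓ : H → ℋ a linear isometry with adjoint π := ℓ*, and (U_t)_{t ∈ ℝ} a one-parameter group of unitary operators on ℋ. Fix T > 0, a set Ω, an orthonormal basis (e_i)_{i ∈ I} of U, maps α : [0,T] × H × Ω → H and σ : [0,T] × H × Ω → L(U,H), a function f : [0,T] × Ω → [0,∞), and constants C₀, θ ∈ ℝ with C₀ ≥ θ. Define a(t,v,ω) := (U_t)*( ℓ( α(t, π(U_t v), ω) ) ) and b(t,v,ω) := (U_t)* ∘ ℓ ∘ σ(t, π(U_t v), ω). Suppose that for all y ∈ H and all (t,ω): 2⟨α(t,y,ω), y⟩_H + ∑_{i ∈ I} ‖σ(t,y,ω) e_i‖_H² ≤ (C₀ − θ) ‖y‖_H² + f(t,ω). Then for all v ∈ ℋ and all (t,ω): 2⟨a(t,v,ω), v⟩_ℋ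 + ∑_{i ∈ I} ‖b(t,v,ω) e_i‖_ℋ² ≤ (C₀ − θ) ‖v‖_ℋ² + f(t,ω). -/
open scoped ENNReal RealInnerProductSpace

/-!
If `J` is a contraction between Hilbert spaces then so is `J†`. Passing from `(x, g)` at `J† v` to
`(J x, J ∘ g)` at `v` therefore leaves the inner product unchanged, does not increase the square
sum, and does not decrease the bound `c ‖·‖² + r`. The transfer is this step for `J = ℓ`, followed
by the same step for `J = (U t)†`.
-/

open ContinuousLinearMap (adjoint)
open scoped InnerProductSpace

section Contraction

variable {𝕜 H K ι : Type*} [RCLike 𝕜]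
  [NormedAddCommGroup H] [InnerProductSpace 𝕜 H] [CompleteSpace H]
  [NormedAddCommGroup K] [InnerProductSpace 𝕜 K] [CompleteSpace K]

theorem norm_adjoint_apply_le_of_norm_apply_le {J : H →L[𝕜] K} (hJ : ∀ x, ‖J x‖ ≤ ‖x‖) (y : K) :
    ‖adjoint J y‖ ≤ ‖y‖ := by
  have norm_le_one : ‖adjoint J‖ ≤ 1 := by
    rw [LinearIsometryEquiv.norm_map]
    exact J.opNorm_le_bound zero_le_one (by simpa only [one_mul] using hJ)
  simpa only [one_mul] using (adjoint J).le_of_opNorm_le norm_le_one y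

theorem coercive_bound_of_contraction {J : H →L[𝕜] K} (hJ : ∀ x, ‖J x‖ ≤ ‖x‖)
    {x : H} {g : ι → H} {v : K} {c r : ℝ} (hc : 0 ≤ c)
    (hbound : ((2 * RCLike.re ⟪x, adjoint J v⟫_𝕜 : ℝ) : EReal) +
        (∑' i, (‖g i‖₊ : ℝ≥0∞) ^ 2 : ℝ≥0∞) ≤ ((c * ‖adjoint J v‖ ^ 2 + r : ℝ) : EReal)) :
    ((2 * RCLike.re ⟪J x, v⟫_𝕜 : ℝ) : EReal) +
        (∑' i, (‖J (g i)‖₊ : ℝ≥0∞) ^ 2 : ℝ≥0∞) ≤ ((c * ‖v‖ ^ 2 + r : ℝ) : EReal) := by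
  have tsum_le : ∑' i, (‖J (g i)‖₊ : ℝ≥0∞) ^ 2 ≤ ∑' i, (‖g i‖₊ : ℝ≥0∞) ^ 2 := by
    gcongr with i
    exact hJ (g i)
  have rhs_le : c * ‖adjoint J v‖ ^ 2 + r ≤ c * ‖v‖ ^ 2 + r := by
    gcongr
    exact norm_adjoint_apply_le_of_norm_apply_le hJ v
  rw [ContinuousLinearMap.adjoint_inner_right] at hbound
  calc
    _ ≤ ((2 * RCLike.re ⟪J x, v⟫_𝕜 : ℝ) : EReal) + (∑' i, (‖g i‖₊ : ℝ≥0∞) ^ 2 : ℝ≥0∞) :=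
      add_le_add_right (EReal.coe_ennreal_le_coe_ennreal_iff.2 tsum_le) _
    _ ≤ ((c * ‖adjoint J v‖ ^ 2 + r : ℝ) : EReal) := hbound
    _ ≤ ((c * ‖v‖ ^ 2 + r : ℝ) : EReal) := EReal.coe_le_coe_iff.2 rhs_le

end Contraction

theorem coercivity_transfer_general
    {𝕜 E H 𝓗 τ Ω ι : Type*} [RCLike 𝕜]
    [NormedAddCommGroup E] [NormedSpace 𝕜 E]
    [NormedAddCommGroup H] [InnerProductSpace 𝕜 H] [CompleteSpace H]
    [NormedAddCommGroup 𝓗] [InnerProductSpace 𝕜 𝓗] [CompleteSpace 𝓗]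
    {ℓ : H →L[𝕜] 𝓗} (hℓ : ∀ x, ‖ℓ x‖ ≤ ‖x‖)
    {U : τ → 𝓗 →L[𝕜] 𝓗} (hU : ∀ t x, ‖U t x‖ ≤ ‖x‖)
    {s : Set τ} {e : ι → E} {α : τ → H → Ω → H} {σ : τ → H → Ω → (E →L[𝕜] H)}
    {f : τ → Ω → ℝ} {c : ℝ} (hc : 0 ≤ c)
    {a : τ → 𝓗 → Ω → 𝓗} (ha : ∀ t v ω, a t v ω = adjoint (U t) (ℓ (α t (adjoint ℓ (U t v)) ω)))
    {b : τ → 𝓗 → Ω → (E →L[𝕜] 𝓗)}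
    (hb : ∀ t v ω, b t v ω = (adjoint (U t) ∘L ℓ) ∘L σ t (adjoint ℓ (U t v)) ω)
    (hcoer : ∀ y, ∀ t ∈ s, ∀ ω,
      ((2 * RCLike.re ⟪α t y ω, y⟫_𝕜 : ℝ) : EReal) +
          (∑' i, (‖σ t y ω (e i)‖₊ : ℝ≥0∞) ^ 2 : ℝ≥0∞) ≤
        ((c * ‖y‖ ^ 2 + f t ω : ℝ) : EReal)) :
    ∀ v, ∀ t ∈ s, ∀ ω,
      ((2 * RCLike.re ⟪a t v ω, v⟫_𝕜 : ℝ) : EReal) +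
          (∑' i, (‖b t v ω (e i)‖₊ : ℝ≥0∞) ^ 2 : ℝ≥0∞) ≤
        ((c * ‖v‖ ^ 2 + f t ω : ℝ) : EReal) := by
  intro v t ht ω
  have bound_at_U_apply := coercive_bound_of_contraction hℓ hc (hcoer (adjoint ℓ (U t v)) t ht ω)
  rw [ha, hb]
  apply coercive_bound_of_contraction (norm_adjoint_apply_le_of_norm_apply_le (hU t)) hc
  rw [ContinuousLinearMap.adjoint_adjoint]
  exact bound_at_U_apply

/-- Transfer of the coercivity condition (H3) from the coefficients `(α, σ)` on `H` to
the transferred coefficients `a(t,v,ω) = (U_t)* (ℓ (α(t, π (U_t v), ω)))` and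
`b(t,v,ω) = (U_t)* ∘ ℓ ∘ σ(t, π (U_t v), ω)` on `𝓗`, where `π = ℓ*` and the squared
Hilbert–Schmidt norm is computed as `∑' i, ‖· (e i)‖² ∈ [0,∞]` for an orthonormal
basis `e` of the separable Hilbert space `E`. -/
theorem coercivity_transfer
    {E H 𝓗 : Type*}
    [NormedAddCommGroup E] [InnerProductSpace ℝ E] [CompleteSpace E]
    [TopologicalSpace.SeparableSpace E]
    [NormedAddCommGroup H] [InnerProductSpace ℝ H] [CompleteSpace H]
    [NormedAddCommGroup 𝓗] [InnerProductSpace ℝ 𝓗] [CompleteSpace 𝓗]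
    (ℓ : H →L[ℝ] 𝓗) (hℓ : ∀ x : H, ‖ℓ x‖ = ‖x‖)
    (U : ℝ → 𝓗 →L[ℝ] 𝓗)
    (hU0 : U 0 = 1)
    (hUadd : ∀ s t : ℝ, U (s + t) = (U s).comp (U t))
    (hUiso : ∀ (t : ℝ) (x : 𝓗), ‖U t x‖ = ‖x‖)
    (hUsurj : ∀ t : ℝ, Function.Surjective (U t))
    (T : ℝ) (hT : 0 < T) (Ω : Type*)
    {ι : Type*} (e : HilbertBasis ι ℝ E)
    (α : ℝ → H → Ω → H) (σ : ℝ → H → Ω → (E →L[ℝ] H))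
    (f : ℝ → Ω → ℝ) (hf : ∀ t ω, 0 ≤ f t ω)
    (C₀ θ : ℝ) (hC₀θ : θ ≤ C₀)
    (a : ℝ → 𝓗 → Ω → 𝓗)
    (ha : ∀ (t : ℝ) (v : 𝓗) (ω : Ω),
      a t v ω = (ContinuousLinearMap.adjoint (U t))
        (ℓ (α t ((ContinuousLinearMap.adjoint ℓ) (U t v)) ω)))
    (b : ℝ → 𝓗 → Ω → (E →L[ℝ] 𝓗))
    (hb : ∀ (t : ℝ) (v : 𝓗) (ω : Ω),
      b t v ω = ((ContinuousLinearMap.adjoint (U t)).comp ℓ).comp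
        (σ t ((ContinuousLinearMap.adjoint ℓ) (U t v)) ω))
    (hcoer : ∀ (y : H), ∀ t ∈ Set.Icc (0 : ℝ) T, ∀ ω : Ω,
      ((2 * ⟪α t y ω, y⟫ : ℝ) : EReal) +
          (∑' i, ((‖(σ t y ω) (e i)‖₊ : ℝ≥0∞) ^ 2) : ℝ≥0∞) ≤
        (((C₀ - θ) * ‖y‖ ^ 2 + f t ω : ℝ) : EReal)) :
    ∀ (v : 𝓗), ∀ t ∈ Set.Icc (0 : ℝ) T, ∀ ω : Ω,
      ((2 * ⟪a t v ω, v⟫ : ℝ) : EReal) +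
          (∑' i, ((‖(b t v ω) (e i)‖₊ : ℝ≥0∞) ^ 2) : ℝ≥0∞) ≤
        (((C₀ - θ) * ‖v‖ ^ 2 + f t ω : ℝ) : EReal) := by
  exact coercivity_transfer_general (fun x => (hℓ x).le) (fun t x => (hUiso t x).le)
    (sub_nonneg.2 hC₀θ) ha hb hcoer
end

section
/- Let U, H and ℋ be real Hilbert spaces with U separable, ℓ : H → ℋ a linear isometry with adjoint π := ℓ*, and (U_t)_{t ∈ ℝ} a one-parameter group of unitary operators on ℋ. Fix T > 0, a set Ω, an orthonormal basis (e_i)_{i ∈ I} of U, maps α : [0,T] × H × Ω → H and σ : [0,T] × H × Ω → L(U,H), a function f : [0,T] × Ω → [0,∞), a monotone nondecreasing function τ : [0,∞) → [0,∞), and constants β ≥ 0, C₀ ≥ θ > 0, C ≥ 0. Define a(t,v,ω) := (U_t)*( ℓ( α(t, π(U_t v), ω) ) ) and b(t,v,ω) := (U_t)* ∘ ℓ ∘ σ(t, π(U_t v), ω). Suppose that α and σ satisfy, for all x, y, z ∈ H and (t,ω): (H1) λ ↦ ⟨α(t, x + λ y, ω), z⟩_H is continuous on ℝ; (H2') 2⟨α(t,x,ω)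 − α(t,y,ω), x − y⟩_H + ∑_i ‖(σ(t,x,ω) − σ(t,y,ω)) e_i‖_H² ≤ (f(t,ω) + τ(‖y‖_H)) ‖x − y‖_H²; (H3) 2⟨α(t,y,ω), y⟩_H + ∑_i ‖σ(t,y,ω) e_i‖_H² ≤ (C₀ − θ) ‖y‖_H² + f(t,ω); (H4') ‖α(t,y,ω)‖_H² ≤ (f(t,ω) + C₀ ‖y‖_H²)(1 + ‖y‖_H^β); and the bound ∑_i ‖σ(t,y,ω) e_i‖_H² ≤ C (f(t,ω) + ‖y‖_H²). Then a and b satisfy the same five conditions on ℋ with the same f, τ, β, C₀, θ and C: for all u, v, w ∈ ℋ and (t,ω), λ ↦ ⟨a(t, u + λ v, ω), w⟩_ℋ is continuous on ℝ; 2⟨a(t,u,ω) − a(t,v,ω), u − v⟩_ℋ + ∑_i ‖(b(t,u,ω) − b(t,v,ω)) e_i‖_ℋ² ≤ (f(t,ω) + τ(‖v‖_ℋ)) ‖u − v‖_ℋ²; 2⟨a(t,v,ω), v⟩_ℋ + ∑_i ‖b(t,v,ω) e_i‖_ℋ² ≤ (C₀ − θ) ‖v‖_ℋ² + f(t,ω);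 ‖a(t,v,ω)‖_ℋ² ≤ (f(t,ω) + C₀ ‖v‖_ℋ²)(1 + ‖v‖_ℋ^β); and ∑_i ‖b(t,v,ω) e_i‖_ℋ² ≤ C (f(t,ω) + ‖v‖_ℋ²). -/
open scoped ENNReal RealInnerProductSpace

/-!
With `J t = (U t)* ∘ ℓ`, whose adjoint is `ℓ* ∘ U t`, the transferred coefficients are
`a = J t ∘ α ∘ (J t)*` and `b = J t ∘ σ ∘ (J t)*`. Moving `J t` across the inner product turns every
pairing on `𝓗` into the same pairing on `H` at the points `(J t)* v`, and since `J t` and its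
adjoint are contractions, neither the norms of the coefficients nor those of their arguments grow.
All the bounds are nondecreasing in the norm of the argument, so they survive the transfer.
-/

section Contraction

variable {E F G ι : Type*} [AddCommMonoid E] [Module ℝ E] [TopologicalSpace E]
  [SeminormedAddCommGroup F] [NormedSpace ℝ F] [SeminormedAddCommGroup G] [NormedSpace ℝ G]

theorem norm_apply_le_of_opNorm_le_one {J : F →L[ℝ] G} (hJ : ‖J‖ ≤ 1) (x : F) : ‖J x‖ ≤ ‖x‖ := by
  simpa only [one_mul] using J.le_of_opNorm_le hJ x

/-- The sum of `‖S (e i)‖²` over a family `e`, with values in `[0, ∞]`; for an orthonormal basis `e`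
this is the squared Hilbert–Schmidt norm of `S`. -/
noncomputable def hilbertSchmidtSq (e : ι → E) (S : E →L[ℝ] F) : ℝ≥0∞ :=
  ∑' i, ‖S (e i)‖ₑ ^ 2

theorem hilbertSchmidtSq_comp_le (e : ι → E) {J : F →L[ℝ] G} (hJ : ‖J‖ ≤ 1) (S : E →L[ℝ] F) :
    hilbertSchmidtSq e (J.comp S) ≤ hilbertSchmidtSq e S := by
  refine ENNReal.tsum_le_tsum fun i => ?_
  gcongr
  exact enorm_le_iff_norm_le.2 (norm_apply_le_of_opNorm_le_one hJ (S (e i)))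

end Contraction

section Adjoint

open ContinuousLinearMap (adjoint)

variable {E F G ι : Type*} [AddCommMonoid E] [Module ℝ E] [TopologicalSpace E]
  [NormedAddCommGroup F] [InnerProductSpace ℝ F] [CompleteSpace F]
  [NormedAddCommGroup G] [InnerProductSpace ℝ G] [CompleteSpace G]

theorem norm_adjoint_apply_le_of_opNorm_le_one {J : F →L[ℝ] G} (hJ : ‖J‖ ≤ 1) (v : G) :
    ‖adjoint J v‖ ≤ ‖v‖ :=
  norm_apply_le_of_opNorm_le_one ((LinearIsometryEquiv.norm_map adjoint J).trans_le hJ) v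

theorem two_mul_inner_add_hilbertSchmidtSq_comp_le (e : ι → E) {J : F →L[ℝ] G} (hJ : ‖J‖ ≤ 1)
    (x : F) (v : G) (S : E →L[ℝ] F) :
    ((2 * ⟪J x, v⟫ : ℝ) : EReal) + hilbertSchmidtSq e (J.comp S) ≤
      ((2 * ⟪x, adjoint J v⟫ : ℝ) : EReal) + hilbertSchmidtSq e S := by
  rw [ContinuousLinearMap.adjoint_inner_right]
  gcongr
  exact EReal.coe_ennreal_le_coe_ennreal_iff.2 (hilbertSchmidtSq_comp_le e hJ S)

theorem adjoint_adjoint_comp {F' : Type*} [NormedAddCommGroup F'] [InnerProductSpace ℝ F']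
    [CompleteSpace F'] (A : F →L[ℝ] G) (B : F' →L[ℝ] G) :
    adjoint ((adjoint A).comp B) = (adjoint B).comp A := by
  rw [ContinuousLinearMap.adjoint_comp, ContinuousLinearMap.adjoint_adjoint]

theorem norm_adjoint_comp_le_one_s8 {F' : Type*} [SeminormedAddCommGroup F'] [NormedSpace ℝ F']
    {A : F →L[ℝ] G} {B : F' →L[ℝ] G} (hA : ‖A‖ ≤ 1) (hB : ‖B‖ ≤ 1) :
    ‖(adjoint A).comp B‖ ≤ 1 :=
  calc ‖(adjoint A).comp B‖
      ≤ ‖adjoint A‖ * ‖B‖ := ContinuousLinearMap.opNorm_comp_le _ _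
    _ = ‖A‖ * ‖B‖ := by rw [LinearIsometryEquiv.norm_map]
    _ ≤ 1 := mul_le_one₀ hA (norm_nonneg B) hB

end Adjoint

section Conditions

variable {𝕋 Ω E H ι : Type*} [AddCommGroup E] [Module ℝ E] [TopologicalSpace E]
  [NormedAddCommGroup H] [InnerProductSpace ℝ H]

/-- Condition (H1) at the times in `s`: the drift is weakly continuous along lines. -/
def IsHemicontinuousOn (s : Set 𝕋) (α : 𝕋 → H → Ω → H) : Prop :=
  ∀ x y z : H, ∀ t ∈ s, ∀ ω, Continuous fun lam : ℝ => ⟪α t (x + lam • y) ω, z⟫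

/-- Condition (H2') at the times in `s`. The rate `κ t ω ‖y‖` stands for `f(t,ω) + τ(‖y‖)`. -/
def IsLocallyMonotoneOn (s : Set 𝕋) (e : ι → E) (κ : 𝕋 → Ω → ℝ → ℝ)
    (α : 𝕋 → H → Ω → H) (σ : 𝕋 → H → Ω → E →L[ℝ] H) : Prop :=
  ∀ x y : H, ∀ t ∈ s, ∀ ω,
    ((2 * ⟪α t x ω - α t y ω, x - y⟫ : ℝ) : EReal) + hilbertSchmidtSq e (σ t x ω - σ t y ω) ≤
      ((κ t ω ‖y‖ * ‖x - y‖ ^ 2 : ℝ) : EReal)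

/-- Condition (H3) at the times in `s`. The bound `φ t ω ‖y‖` stands for
`(C₀ - θ) ‖y‖² + f(t,ω)`. -/
def IsCoerciveOn (s : Set 𝕋) (e : ι → E) (φ : 𝕋 → Ω → ℝ → ℝ)
    (α : 𝕋 → H → Ω → H) (σ : 𝕋 → H → Ω → E →L[ℝ] H) : Prop :=
  ∀ y : H, ∀ t ∈ s, ∀ ω,
    ((2 * ⟪α t y ω, y⟫ : ℝ) : EReal) + hilbertSchmidtSq e (σ t y ω) ≤ (φ t ω ‖y‖ : EReal)

/-- Condition (H4') at the times in `s`. The bound `φ t ω ‖y‖` stands for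
`(f(t,ω) + C₀ ‖y‖²) (1 + ‖y‖ ^ β)`. -/
def HasDriftGrowthOn (s : Set 𝕋) (φ : 𝕋 → Ω → ℝ → ℝ) (α : 𝕋 → H → Ω → H) : Prop :=
  ∀ y : H, ∀ t ∈ s, ∀ ω, ‖α t y ω‖ ^ 2 ≤ φ t ω ‖y‖

/-- The diffusion bound (2.5) at the times in `s`. The bound `φ t ω ‖y‖` stands for
`C (f(t,ω) + ‖y‖²)`. -/
def HasDiffusionGrowthOn (s : Set 𝕋) (e : ι → E) (φ : 𝕋 → Ω → ℝ → ℝ≥0∞)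
    (σ : 𝕋 → H → Ω → E →L[ℝ] H) : Prop :=
  ∀ y : H, ∀ t ∈ s, ∀ ω, hilbertSchmidtSq e (σ t y ω) ≤ φ t ω ‖y‖

end Conditions

section Transfer

open ContinuousLinearMap (adjoint)
open Set (Ici)

variable {𝕋 Ω E H 𝓗 ι : Type*} [AddCommGroup E] [Module ℝ E] [TopologicalSpace E]
  [NormedAddCommGroup H] [InnerProductSpace ℝ H] [CompleteSpace H]
  [NormedAddCommGroup 𝓗] [InnerProductSpace ℝ 𝓗] [CompleteSpace 𝓗]

/-- The drift `J_t ∘ α(t, ·, ω) ∘ J_t*` induced on `𝓗` by operators `J t : H → 𝓗`. The drift `a` of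
the dilated equation is the case `J t = (U t)* ∘ ℓ`. -/
noncomputable def transferDrift (J : 𝕋 → H →L[ℝ] 𝓗) (α : 𝕋 → H → Ω → H) (t : 𝕋) (v : 𝓗) (ω : Ω) :
    𝓗 :=
  J t (α t (adjoint (J t) v) ω)

/-- The diffusion coefficient on `𝓗` corresponding to `transferDrift`. The diffusion coefficient `b`
of the dilated equation is the case `J t = (U t)* ∘ ℓ`. -/
noncomputable def transferDiffusion (J : 𝕋 → H →L[ℝ] 𝓗) (σ : 𝕋 → H → Ω → E →L[ℝ] H)
    (t : 𝕋) (v : 𝓗) (ω : Ω) : E →L[ℝ] 𝓗 :=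
  (J t).comp (σ t (adjoint (J t) v) ω)

theorem transferDrift_adjoint_comp (ℓ : H →L[ℝ] 𝓗) (U : 𝕋 → 𝓗 →L[ℝ] 𝓗) (α : 𝕋 → H → Ω → H)
    (t : 𝕋) (v : 𝓗) (ω : Ω) :
    transferDrift (fun t => (adjoint (U t)).comp ℓ) α t v ω =
      adjoint (U t) (ℓ (α t (adjoint ℓ (U t v)) ω)) := by
  simp only [transferDrift, adjoint_adjoint_comp, ContinuousLinearMap.comp_apply]

theorem transferDiffusion_adjoint_comp (ℓ : H →L[ℝ] 𝓗) (U : 𝕋 → 𝓗 →L[ℝ] 𝓗)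
    (σ : 𝕋 → H → Ω → E →L[ℝ] H) (t : 𝕋) (v : 𝓗) (ω : Ω) :
    transferDiffusion (fun t => (adjoint (U t)).comp ℓ) σ t v ω =
      ((adjoint (U t)).comp ℓ).comp (σ t (adjoint ℓ (U t v)) ω) := by
  simp only [transferDiffusion, adjoint_adjoint_comp, ContinuousLinearMap.comp_apply]

variable {s : Set 𝕋} {J : 𝕋 → H →L[ℝ] 𝓗} {e : ι → E}
  {α : 𝕋 → H → Ω → H} {σ : 𝕋 → H → Ω → E →L[ℝ] H}

theorem IsHemicontinuousOn.transfer (hα : IsHemicontinuousOn s α) :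
    IsHemicontinuousOn s (transferDrift J α) := by
  intro u v w t ht ω
  simpa only [transferDrift, map_add, map_smul, ContinuousLinearMap.adjoint_inner_right]
    using hα (adjoint (J t) u) (adjoint (J t) v) (adjoint (J t) w) t ht ω

theorem IsLocallyMonotoneOn.transfer {κ : 𝕋 → Ω → ℝ → ℝ} (hJ : ∀ t ∈ s, ‖J t‖ ≤ 1)
    (hκ_nonneg : ∀ t ∈ s, ∀ ω, ∀ r ∈ Ici 0, 0 ≤ κ t ω r)
    (hκ_mono : ∀ t ∈ s, ∀ ω, MonotoneOn (κ t ω) (Ici 0))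
    (hασ : IsLocallyMonotoneOn s e κ α σ) :
    IsLocallyMonotoneOn s e κ (transferDrift J α) (transferDiffusion J σ) := by
  intro u v t ht ω
  set x := adjoint (J t) u
  set y := adjoint (J t) v
  have hxy : adjoint (J t) (u - v) = x - y := map_sub _ u v
  have norm_sub_le : ‖x - y‖ ≤ ‖u - v‖ :=
    hxy ▸ norm_adjoint_apply_le_of_opNorm_le_one (hJ t ht) (u - v)
  have rate_le : κ t ω ‖y‖ ≤ κ t ω ‖v‖ :=
    hκ_mono t ht ω (norm_nonneg y) (norm_nonneg v)
      (norm_adjoint_apply_le_of_opNorm_le_one (hJ t ht) v)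
  have rate_nonneg : 0 ≤ κ t ω ‖v‖ := hκ_nonneg t ht ω _ (norm_nonneg v)
  calc ((2 * ⟪transferDrift J α t u ω - transferDrift J α t v ω, u - v⟫ : ℝ) : EReal) +
        hilbertSchmidtSq e (transferDiffusion J σ t u ω - transferDiffusion J σ t v ω)
      = ((2 * ⟪J t (α t x ω - α t y ω), u - v⟫ : ℝ) : EReal) +
          hilbertSchmidtSq e ((J t).comp (σ t x ω - σ t y ω)) := by
        rw [map_sub, ContinuousLinearMap.comp_sub]; rfl
    _ ≤ ((2 * ⟪α t x ω - α t y ω, x - y⟫ : ℝ) : EReal) +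
          hilbertSchmidtSq e (σ t x ω - σ t y ω) :=
        hxy ▸ two_mul_inner_add_hilbertSchmidtSq_comp_le e (hJ t ht) _ (u - v) _
    _ ≤ ((κ t ω ‖y‖ * ‖x - y‖ ^ 2 : ℝ) : EReal) := hασ x y t ht ω
    _ ≤ ((κ t ω ‖v‖ * ‖u - v‖ ^ 2 : ℝ) : EReal) := by
        gcongr

theorem IsCoerciveOn.transfer {φ : 𝕋 → Ω → ℝ → ℝ} (hJ : ∀ t ∈ s, ‖J t‖ ≤ 1)
    (hφ : ∀ t ∈ s, ∀ ω, MonotoneOn (φ t ω) (Ici 0)) (hασ : IsCoerciveOn s e φ α σ) :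
    IsCoerciveOn s e φ (transferDrift J α) (transferDiffusion J σ) := by
  intro v t ht ω
  have bound_le : φ t ω ‖adjoint (J t) v‖ ≤ φ t ω ‖v‖ :=
    hφ t ht ω (norm_nonneg _) (norm_nonneg v)
      (norm_adjoint_apply_le_of_opNorm_le_one (hJ t ht) v)
  exact (two_mul_inner_add_hilbertSchmidtSq_comp_le e (hJ t ht) _ v _).trans <|
    (hασ (adjoint (J t) v) t ht ω).trans (EReal.coe_le_coe_iff.2 bound_le)

theorem HasDriftGrowthOn.transfer {φ : 𝕋 → Ω → ℝ → ℝ} (hJ : ∀ t ∈ s, ‖J t‖ ≤ 1)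
    (hφ : ∀ t ∈ s, ∀ ω, MonotoneOn (φ t ω) (Ici 0)) (hα : HasDriftGrowthOn s φ α) :
    HasDriftGrowthOn s φ (transferDrift J α) := by
  intro v t ht ω
  set y := adjoint (J t) v
  calc ‖J t (α t y ω)‖ ^ 2
      ≤ ‖α t y ω‖ ^ 2 := by
        gcongr
        exact norm_apply_le_of_opNorm_le_one (hJ t ht) _
    _ ≤ φ t ω ‖y‖ := hα y t ht ω
    _ ≤ φ t ω ‖v‖ :=
        hφ t ht ω (norm_nonneg y) (norm_nonneg v)
          (norm_adjoint_apply_le_of_opNorm_le_one (hJ t ht) v)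

theorem HasDiffusionGrowthOn.transfer {φ : 𝕋 → Ω → ℝ → ℝ≥0∞} (hJ : ∀ t ∈ s, ‖J t‖ ≤ 1)
    (hφ : ∀ t ∈ s, ∀ ω, MonotoneOn (φ t ω) (Ici 0)) (hσ : HasDiffusionGrowthOn s e φ σ) :
    HasDiffusionGrowthOn s e φ (transferDiffusion J σ) := by
  intro v t ht ω
  set y := adjoint (J t) v
  calc hilbertSchmidtSq e ((J t).comp (σ t y ω))
      ≤ hilbertSchmidtSq e (σ t y ω) := hilbertSchmidtSq_comp_le e (hJ t ht) _
    _ ≤ φ t ω ‖y‖ := hσ y t ht ω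
    _ ≤ φ t ω ‖v‖ :=
        hφ t ht ω (norm_nonneg y) (norm_nonneg v)
          (norm_adjoint_apply_le_of_opNorm_le_one (hJ t ht) v)

theorem coefficient_conditions_transfer_general (hJ : ∀ t ∈ s, ‖J t‖ ≤ 1)
    {f : 𝕋 → Ω → ℝ} (hf : ∀ t ∈ s, ∀ ω, 0 ≤ f t ω)
    {τ : ℝ → ℝ} (hτ_nonneg : ∀ r, 0 ≤ r → 0 ≤ τ r) (hτ_mono : MonotoneOn τ (Ici 0))
    {β C₀ θ C : ℝ} (hβ : 0 ≤ β) (hC₀ : 0 ≤ C₀) (hθ : θ ≤ C₀) (hC : 0 ≤ C)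
    (hemicontinuous : IsHemicontinuousOn s α)
    (locallyMonotone : IsLocallyMonotoneOn s e (fun t ω r => f t ω + τ r) α σ)
    (coercive : IsCoerciveOn s e (fun t ω r => (C₀ - θ) * r ^ 2 + f t ω) α σ)
    (driftGrowth : HasDriftGrowthOn s (fun t ω r => (f t ω + C₀ * r ^ 2) * (1 + r ^ β)) α)
    (diffusionGrowth :
      HasDiffusionGrowthOn s e (fun t ω r => ENNReal.ofReal (C * (f t ω + r ^ 2))) σ) :
    IsHemicontinuousOn s (transferDrift J α) ∧
    IsLocallyMonotoneOn s e (fun t ω r => f t ω + τ r)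
      (transferDrift J α) (transferDiffusion J σ) ∧
    IsCoerciveOn s e (fun t ω r => (C₀ - θ) * r ^ 2 + f t ω)
      (transferDrift J α) (transferDiffusion J σ) ∧
    HasDriftGrowthOn s (fun t ω r => (f t ω + C₀ * r ^ 2) * (1 + r ^ β)) (transferDrift J α) ∧
    HasDiffusionGrowthOn s e (fun t ω r => ENNReal.ofReal (C * (f t ω + r ^ 2)))
      (transferDiffusion J σ) := by
  have sq_mono : MonotoneOn (fun r : ℝ => r ^ 2) (Ici 0) := pow_left_monotoneOn
  refine ⟨hemicontinuous.transfer, locallyMonotone.transfer hJ ?rate_nonneg ?rate_mono,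
    coercive.transfer hJ ?coercivity_mono, driftGrowth.transfer hJ ?drift_mono,
    diffusionGrowth.transfer hJ ?diffusion_mono⟩
  case rate_nonneg => exact fun t ht ω r hr => add_nonneg (hf t ht ω) (hτ_nonneg r hr)
  case rate_mono => exact fun t _ ω => hτ_mono.const_add (f t ω)
  case coercivity_mono =>
    exact fun t _ ω => ((monotone_mul_left_of_nonneg (sub_nonneg.2 hθ)).comp_monotoneOn
      sq_mono).add_const (f t ω)
  case drift_mono =>
    intro t ht ω r (hr : 0 ≤ r) r' _ hrr'
    have hfω : 0 ≤ f t ω := hf t ht ω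
    dsimp only
    gcongr
  case diffusion_mono =>
    exact fun t _ ω => (ENNReal.ofReal_mono.comp (monotone_mul_left_of_nonneg hC)).comp_monotoneOn
      (sq_mono.const_add (f t ω))

end Transfer

/-- The full reduction step in the proof of Theorem 2.4: if the coefficients `(α, σ)`
on `H` satisfy hemicontinuity (H1), local monotonicity (H2'), coercivity (H3), the
growth condition (H4') and the linear growth bound on `σ`, then the transferred
coefficients `a(t,v,ω) = (U_t)* (ℓ (α(t, π (U_t v), ω)))` and
`b(t,v,ω) = (U_t)* ∘ ℓ ∘ σ(t, π (U_t v), ω)` on the dilated space `𝓗` satisfy the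
same five conditions with the same `f, τ, β, C₀, θ, C`; here `π = ℓ*` and the squared
Hilbert–Schmidt norm is `∑' i, ‖· (e i)‖² ∈ [0,∞]` for an orthonormal basis `e` of the
separable Hilbert space `E`. -/
theorem coefficient_conditions_transfer
    {E H 𝓗 : Type*}
    [NormedAddCommGroup E] [InnerProductSpace ℝ E] [CompleteSpace E]
    [TopologicalSpace.SeparableSpace E]
    [NormedAddCommGroup H] [InnerProductSpace ℝ H] [CompleteSpace H]
    [NormedAddCommGroup 𝓗] [InnerProductSpace ℝ 𝓗] [CompleteSpace 𝓗]
    (ℓ : H →L[ℝ] 𝓗) (hℓ : ∀ x : H, ‖ℓ x‖ = ‖x‖)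
    (U : ℝ → 𝓗 →L[ℝ] 𝓗)
    (hU0 : U 0 = 1)
    (hUadd : ∀ s t : ℝ, U (s + t) = (U s).comp (U t))
    (hUiso : ∀ (t : ℝ) (x : 𝓗), ‖U t x‖ = ‖x‖)
    (hUsurj : ∀ t : ℝ, Function.Surjective (U t))
    (T : ℝ) (hT : 0 < T) (Ω : Type*)
    {ι : Type*} (e : HilbertBasis ι ℝ E)
    (α : ℝ → H → Ω → H) (σ : ℝ → H → Ω → (E →L[ℝ] H))
    (f : ℝ → Ω → ℝ) (hf : ∀ t ω, 0 ≤ f t ω)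
    (τ : ℝ → ℝ) (hτ0 : ∀ r, 0 ≤ r → 0 ≤ τ r) (hτmono : MonotoneOn τ (Set.Ici (0 : ℝ)))
    (β C₀ θ C : ℝ) (hβ : 0 ≤ β) (hθ : 0 < θ) (hC₀θ : θ ≤ C₀) (hC : 0 ≤ C)
    (a : ℝ → 𝓗 → Ω → 𝓗)
    (ha : ∀ (t : ℝ) (v : 𝓗) (ω : Ω),
      a t v ω = (ContinuousLinearMap.adjoint (U t))
        (ℓ (α t ((ContinuousLinearMap.adjoint ℓ) (U t v)) ω)))
    (b : ℝ → 𝓗 → Ω → (E →L[ℝ] 𝓗))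
    (hb : ∀ (t : ℝ) (v : 𝓗) (ω : Ω),
      b t v ω = ((ContinuousLinearMap.adjoint (U t)).comp ℓ).comp
        (σ t ((ContinuousLinearMap.adjoint ℓ) (U t v)) ω))
    -- (H1) hemicontinuity of α
    (hH1 : ∀ (x y z : H), ∀ t ∈ Set.Icc (0 : ℝ) T, ∀ ω : Ω,
      Continuous fun lam : ℝ => ⟪α t (x + lam • y) ω, z⟫)
    -- (H2') local monotonicity of (α, σ)
    (hH2 : ∀ (x y : H), ∀ t ∈ Set.Icc (0 : ℝ) T, ∀ ω : Ω,
      ((2 * ⟪α t x ω - α t y ω, x - y⟫ : ℝ) : EReal) +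
          (∑' i, ((‖(σ t x ω - σ t y ω) (e i)‖₊ : ℝ≥0∞) ^ 2) : ℝ≥0∞) ≤
        (((f t ω + τ ‖y‖) * ‖x - y‖ ^ 2 : ℝ) : EReal))
    -- (H3) coercivity of (α, σ)
    (hH3 : ∀ (y : H), ∀ t ∈ Set.Icc (0 : ℝ) T, ∀ ω : Ω,
      ((2 * ⟪α t y ω, y⟫ : ℝ) : EReal) +
          (∑' i, ((‖(σ t y ω) (e i)‖₊ : ℝ≥0∞) ^ 2) : ℝ≥0∞) ≤
        (((C₀ - θ) * ‖y‖ ^ 2 + f t ω : ℝ) : EReal))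
    -- (H4') growth of α
    (hH4 : ∀ (y : H), ∀ t ∈ Set.Icc (0 : ℝ) T, ∀ ω : Ω,
      ‖α t y ω‖ ^ 2 ≤ (f t ω + C₀ * ‖y‖ ^ 2) * (1 + ‖y‖ ^ β))
    -- linear growth bound on σ
    (hσ : ∀ (y : H), ∀ t ∈ Set.Icc (0 : ℝ) T, ∀ ω : Ω,
      (∑' i, ((‖(σ t y ω) (e i)‖₊ : ℝ≥0∞) ^ 2) : ℝ≥0∞) ≤
        ENNReal.ofReal (C * (f t ω + ‖y‖ ^ 2))) :
    -- (H1) hemicontinuity of a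
    (∀ (u v w : 𝓗), ∀ t ∈ Set.Icc (0 : ℝ) T, ∀ ω : Ω,
      Continuous fun lam : ℝ => ⟪a t (u + lam • v) ω, w⟫) ∧
    -- (H2') local monotonicity of (a, b)
    (∀ (u v : 𝓗), ∀ t ∈ Set.Icc (0 : ℝ) T, ∀ ω : Ω,
      ((2 * ⟪a t u ω - a t v ω, u - v⟫ : ℝ) : EReal) +
          (∑' i, ((‖(b t u ω - b t v ω) (e i)‖₊ : ℝ≥0∞) ^ 2) : ℝ≥0∞) ≤
        (((f t ω + τ ‖v‖) * ‖u - v‖ ^ 2 : ℝ) : EReal)) ∧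
    -- (H3) coercivity of (a, b)
    (∀ (v : 𝓗), ∀ t ∈ Set.Icc (0 : ℝ) T, ∀ ω : Ω,
      ((2 * ⟪a t v ω, v⟫ : ℝ) : EReal) +
          (∑' i, ((‖(b t v ω) (e i)‖₊ : ℝ≥0∞) ^ 2) : ℝ≥0∞) ≤
        (((C₀ - θ) * ‖v‖ ^ 2 + f t ω : ℝ) : EReal)) ∧
    -- (H4') growth of a
    (∀ (v : 𝓗), ∀ t ∈ Set.Icc (0 : ℝ) T, ∀ ω : Ω,
      ‖a t v ω‖ ^ 2 ≤ (f t ω + C₀ * ‖v‖ ^ 2) * (1 + ‖v‖ ^ β)) ∧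
    -- linear growth bound on b
    (∀ (v : 𝓗), ∀ t ∈ Set.Icc (0 : ℝ) T, ∀ ω : Ω,
      (∑' i, ((‖(b t v ω) (e i)‖₊ : ℝ≥0∞) ^ 2) : ℝ≥0∞) ≤
        ENNReal.ofReal (C * (f t ω + ‖v‖ ^ 2))) := by
  have hJ (t : ℝ) : ‖(ContinuousLinearMap.adjoint (U t)).comp ℓ‖ ≤ 1 := norm_adjoint_comp_le_one_s8
    ((U t).opNorm_le_bound zero_le_one fun x => by rw [hUiso, one_mul])
    (ℓ.opNorm_le_bound zero_le_one fun x => by rw [hℓ, one_mul])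
  simp only [ha, hb, ← transferDrift_adjoint_comp, ← transferDiffusion_adjoint_comp]
  exact coefficient_conditions_transfer_general (fun t _ => hJ t) (fun t _ => hf t) hτ0 hτmono hβ
    (hθ.le.trans hC₀θ) hC₀θ hC hH1 hH2 hH3 hH4 hσ
end
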